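/- Let G be a finite simple graph with adjacency matrix A (over the reals). Let s⁺ and s⁻ denote the sum of the squares of the positive and of the negative eigenvalues of A, respectively, and let χvec(G) be the vector chromatic number of G. Then s⁺ ≤ (χvec(G) − 1) · s⁻. -/

import Mathlib

open Matrix Finset BigOperators

/-- The Frobenius (trace) inner product of two real matrices. -/
noncomputable def frob {n : ℕ} (M N : Matrix (Fin n) (Fin n) ℝ) : ℝ :=
  ∑ u, ∑ v, M u v * N u v

/-- The all-ones matrix. -/
noncomputable def matJ (n : ℕ) : Matrix (Fin n) (Fin n) ℝ :=
  Matrix.of fun _ _ => (1 : ℝ)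

/-- The vector chromatic number of `G`: the supremum of `⟨J, Z⟩` over all real symmetric,
entrywise nonnegative, positive semidefinite matrices `Z` with trace `1` whose entries vanish
on distinct non-adjacent pairs of vertices. -/
noncomputable def chiVec {n : ℕ} (G : SimpleGraph (Fin n)) [DecidableRel G.Adj] : ℝ :=
  sSup { x : ℝ | ∃ Z : Matrix (Fin n) (Fin n) ℝ,
    Z.IsSymm ∧ (∀ u v, 0 ≤ Z u v) ∧ Z.PosSemidef ∧ Z.trace = 1 ∧
    (∀ u v, u ≠ v → ¬ G.Adj u v → Z u v = 0) ∧ x = frob (matJ n) Z }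

/-- The adjacency matrix of a graph is hermitian (it is real symmetric). -/
theorem adjHerm {n : ℕ} (G : SimpleGraph (Fin n)) [DecidableRel G.Adj] :
    (G.adjMatrix ℝ).IsHermitian :=
  (Matrix.conjTranspose_eq_transpose_of_trivial _).trans G.isSymm_adjMatrix

/-- `s⁺`: the sum of the squares of the positive eigenvalues of the adjacency matrix,
counted with multiplicity. -/
noncomputable def sPlus {n : ℕ} (G : SimpleGraph (Fin n)) [DecidableRel G.Adj] : ℝ :=
  ∑ i, if 0 < (adjHerm G).eigenvalues i then ((adjHerm G).eigenvalues i) ^ 2 else 0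

/-- `s⁻`: the sum of the squares of the negative eigenvalues of the adjacency matrix,
counted with multiplicity. -/
noncomputable def sMinus {n : ℕ} (G : SimpleGraph (Fin n)) [DecidableRel G.Adj] : ℝ :=
  ∑ i, if (adjHerm G).eigenvalues i < 0 then ((adjHerm G).eigenvalues i) ^ 2 else 0

/-- `A⁺ = Σ_{θ>0} θ E_θ`: the positive part of the adjacency matrix, obtained from its
spectral decomposition. -/
noncomputable def Aplus {n : ℕ} (G : SimpleGraph (Fin n)) [DecidableRel G.Adj] :
    Matrix (Fin n) (Fin n) ℝ :=
  ((adjHerm G).eigenvectorUnitary : Matrix (Fin n) (Fin n) ℝ) *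
    diagonal (fun i => if 0 < (adjHerm G).eigenvalues i then (adjHerm G).eigenvalues i else 0) *
    star ((adjHerm G).eigenvectorUnitary : Matrix (Fin n) (Fin n) ℝ)

/-- `A⁻ = -Σ_{λ<0} λ E_λ`: the negative part of the adjacency matrix, obtained from its
spectral decomposition. -/
noncomputable def Aminus {n : ℕ} (G : SimpleGraph (Fin n)) [DecidableRel G.Adj] :
    Matrix (Fin n) (Fin n) ℝ :=
  ((adjHerm G).eigenvectorUnitary : Matrix (Fin n) (Fin n) ℝ) *
    diagonal (fun i => if (adjHerm G).eigenvalues i < 0 then -(adjHerm G).eigenvalues i else 0) *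
    star ((adjHerm G).eigenvectorUnitary : Matrix (Fin n) (Fin n) ℝ)

/-!
Let `Q = A⁺ ⊙ A⁺`, which is entrywise nonnegative and, by Schur's product theorem, positive
semidefinite; its entries sum to `s⁺`. Adding to `Q` the Laplacian weighted by the entries of `Q` at
non-edges clears these entries, keeps the sum of all entries and raises the trace to `s⁺ - ⟨A, Q⟩`.
The result is feasible for `χvec` up to scaling, so `s⁺ ≤ χvec (s⁺ - ⟨A, Q⟩)`. Since `A` is a 0-1
matrix, Cauchy-Schwarz gives `(s⁺)² = ⟨A, A⁺⟩² ≤ ⟨A, A⟩ ⟨A, Q⟩ = (s⁺ + s⁻) ⟨A, Q⟩`, and eliminating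
`⟨A, Q⟩` yields the theorem.
-/

section WeightedLaplacian

variable {V R : Type*} [Fintype V] [DecidableEq V]

/-- The Laplacian of the weighted graph whose edge weights are the entries of `W`. Diagonal
entries of `W` (loops) cancel. -/
def weightedLaplacian [AddCommGroup R] (W : Matrix V V R) : Matrix V V R :=
  diagonal (fun u => ∑ v, W u v) - W

lemma sum_weightedLaplacian_apply [AddCommGroup R] (W : Matrix V V R) (u : V) :
    ∑ v, weightedLaplacian W u v = 0 := by
  simp [weightedLaplacian, diagonal_apply]

lemma weightedLaplacian_apply_of_ne [AddCommGroup R] (W : Matrix V V R) {u v : V} (huv : u ≠ v) :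
    weightedLaplacian W u v = -W u v := by
  simp [weightedLaplacian, huv]

lemma weightedLaplacian_apply_self [AddCommGroup R] (W : Matrix V V R) (u : V) :
    weightedLaplacian W u u = ∑ v, W u v - W u u := by
  simp [weightedLaplacian]

lemma isSymm_weightedLaplacian [AddCommGroup R] {W : Matrix V V R} (hW : W.IsSymm) :
    (weightedLaplacian W).IsSymm :=
  (isSymm_diagonal _).sub hW

lemma weightedLaplacian_mulVec_apply [NonUnitalNonAssocRing R] (W : Matrix V V R) (x : V → R)
    (u : V) : (weightedLaplacian W *ᵥ x) u = ∑ v, W u v * (x u - x v) := by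
  rw [weightedLaplacian, sub_mulVec, Pi.sub_apply, mulVec_diagonal, mulVec_apply_eq_sum, sum_mul,
    ← sum_sub_distrib]
  simp only [mul_sub]

lemma dotProduct_weightedLaplacian_mulVec [Field R] [CharZero R] {W : Matrix V V R}
    (hW : W.IsSymm) (x : V → R) :
    x ⬝ᵥ weightedLaplacian W *ᵥ x = (∑ u, ∑ v, W u v * (x u - x v) ^ 2) / 2 := by
  have expand : x ⬝ᵥ weightedLaplacian W *ᵥ x = ∑ u, ∑ v, W u v * (x u * (x u - x v)) := by
    simp only [dotProduct, weightedLaplacian_mulVec_apply, mul_sum, mul_left_comm]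
  have swap : ∑ u, ∑ v, W u v * (x u * (x u - x v)) = ∑ u, ∑ v, W u v * (x v * (x v - x u)) := by
    rw [sum_comm]
    exact sum_congr rfl fun u _ => sum_congr rfl fun v _ => by rw [hW.apply]
  calc x ⬝ᵥ weightedLaplacian W *ᵥ x
      = (∑ u, ∑ v, W u v * (x u * (x u - x v)) + ∑ u, ∑ v, W u v * (x v * (x v - x u))) / 2 := by
        rw [expand, ← swap, add_self_div_two]
    _ = (∑ u, ∑ v, W u v * (x u - x v) ^ 2) / 2 := by
        simp only [← sum_add_distrib, ← mul_add]
        congr! 6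
        ring

lemma posSemidef_weightedLaplacian [Field R] [LinearOrder R] [IsStrictOrderedRing R] [StarRing R]
    [TrivialStar R] {W : Matrix V V R} (hW : W.IsSymm) (hW₀ : ∀ u v, 0 ≤ W u v) :
    (weightedLaplacian W).PosSemidef := by
  refine .of_dotProduct_mulVec_nonneg ?_ fun x => ?_
  · rw [IsHermitian, conjTranspose_eq_transpose_of_trivial, isSymm_weightedLaplacian hW]
  · rw [star_trivial, dotProduct_weightedLaplacian_mulVec hW]
    exact div_nonneg (sum_nonneg fun u _ => sum_nonneg fun v _ =>
      mul_nonneg (hW₀ u v) (sq_nonneg _)) zero_le_two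

end WeightedLaplacian

section NonEdgesToDiagonal

lemma adjMatrix_hadamard_nonneg {V R : Type*} (G : SimpleGraph V) [DecidableRel G.Adj]
    [MulZeroOneClass R] [Preorder R] {Q : Matrix V V R} (hQ₀ : ∀ u v, 0 ≤ Q u v) (u v : V) :
    0 ≤ (G.adjMatrix R ⊙ Q) u v := by
  simp only [hadamard_apply, SimpleGraph.adjMatrix_apply, ite_mul, one_mul, zero_mul]
  split_ifs
  exacts [hQ₀ u v, le_rfl]

variable {V R : Type*} [Fintype V] [DecidableEq V] (G : SimpleGraph V) [DecidableRel G.Adj]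

/-- The matrix obtained from `Q` by moving each entry at a pair of distinct non-adjacent vertices
`u`, `v` to the diagonal entry at `u`, expressed as the addition of a Laplacian so that positive
semidefiniteness is visibly preserved. -/
def nonEdgesToDiagonal [NonAssocRing R] (Q : Matrix V V R) : Matrix V V R :=
  Q + weightedLaplacian (Gᶜ.adjMatrix R ⊙ Q)

lemma nonEdgesToDiagonal_apply_self [NonAssocRing R] (Q : Matrix V V R) (u : V) :
    nonEdgesToDiagonal G Q u u = Q u u + ∑ v, (Gᶜ.adjMatrix R ⊙ Q) u v := by
  simp [nonEdgesToDiagonal, weightedLaplacian_apply_self]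

lemma nonEdgesToDiagonal_apply_of_ne [NonAssocRing R] (Q : Matrix V V R) {u v : V} (huv : u ≠ v) :
    nonEdgesToDiagonal G Q u v = if G.Adj u v then Q u v else 0 := by
  by_cases hadj : G.Adj u v <;>
    simp [nonEdgesToDiagonal, weightedLaplacian_apply_of_ne _ huv, huv, hadj]

lemma sum_nonEdgesToDiagonal [NonAssocRing R] (Q : Matrix V V R) :
    ∑ u, ∑ v, nonEdgesToDiagonal G Q u v = ∑ u, ∑ v, Q u v := by
  simp [nonEdgesToDiagonal, sum_add_distrib, sum_weightedLaplacian_apply]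

lemma sum_eq_apply_self_add_sum_adj_add_sum_compl [NonAssocSemiring R] (Q : Matrix V V R) (u : V) :
    ∑ v, Q u v =
      Q u u + ∑ v, (G.adjMatrix R ⊙ Q) u v + ∑ v, (Gᶜ.adjMatrix R ⊙ Q) u v := by
  classical
  have partition : Q = diagonal Q.diag + G.adjMatrix R ⊙ Q + Gᶜ.adjMatrix R ⊙ Q := by
    rw [← one_hadamard, ← add_hadamard, ← add_hadamard, ← G.compl_adjMatrix_eq_adjMatrix_compl R,
      G.one_add_adjMatrix_add_compl_adjMatrix_eq_of_one R, of_one_hadamard]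
  conv_lhs => rw [partition]
  simp [sum_add_distrib, diagonal_apply]

lemma trace_nonEdgesToDiagonal [NonAssocRing R] (Q : Matrix V V R) :
    (nonEdgesToDiagonal G Q).trace =
      ∑ u, ∑ v, Q u v - ∑ u, ∑ v, (G.adjMatrix R ⊙ Q) u v := by
  rw [← sum_sub_distrib]
  refine sum_congr rfl fun u _ => ?_
  rw [sum_eq_apply_self_add_sum_adj_add_sum_compl G Q u, diag_apply,
    nonEdgesToDiagonal_apply_self]
  abel

lemma nonEdgesToDiagonal_nonneg [NonAssocRing R] [PartialOrder R] [IsOrderedAddMonoid R]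
    {Q : Matrix V V R} (hQ₀ : ∀ u v, 0 ≤ Q u v) (u v : V) : 0 ≤ nonEdgesToDiagonal G Q u v := by
  obtain rfl | huv := eq_or_ne u v
  · rw [nonEdgesToDiagonal_apply_self]
    exact add_nonneg (hQ₀ u u) (sum_nonneg fun v _ => adjMatrix_hadamard_nonneg Gᶜ hQ₀ u v)
  · rw [nonEdgesToDiagonal_apply_of_ne G Q huv]
    split_ifs
    exacts [hQ₀ u v, le_rfl]

lemma posSemidef_nonEdgesToDiagonal [Field R] [LinearOrder R] [IsStrictOrderedRing R] [StarRing R]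
    [TrivialStar R] {Q : Matrix V V R} (hQ₀ : ∀ u v, 0 ≤ Q u v) (hQ : Q.PosSemidef) :
    (nonEdgesToDiagonal G Q).PosSemidef := by
  have hsymm : (Gᶜ.adjMatrix R ⊙ Q).IsSymm := by
    rw [IsSymm, transpose_hadamard, SimpleGraph.transpose_adjMatrix,
      ← conjTranspose_eq_transpose_of_trivial, hQ.isHermitian]
  exact hQ.add (posSemidef_weightedLaplacian hsymm (adjMatrix_hadamard_nonneg Gᶜ hQ₀))

end NonEdgesToDiagonal

section Spectral

variable {V 𝕜 : Type*} [Fintype V] [DecidableEq V] [RCLike 𝕜]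

lemma trace_cfc {A : Matrix V V 𝕜} (hA : A.IsHermitian) (f : ℝ → ℝ) :
    (cfc f A).trace = ∑ i, (f (hA.eigenvalues i) : 𝕜) := by
  rw [hA.cfc_eq, IsHermitian.cfc, Unitary.conjStarAlgAut_apply, trace_mul_cycle,
    Unitary.coe_star_mul_self, one_mul, trace_diagonal]
  rfl

lemma trace_cfc_mul_cfc {A : Matrix V V 𝕜} (hA : A.IsHermitian) (f g : ℝ → ℝ) :
    (cfc f A * cfc g A).trace = ∑ i, (f (hA.eigenvalues i) * g (hA.eigenvalues i) : 𝕜) := by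
  have cont (h : ℝ → ℝ) : ContinuousOn h (spectrum ℝ A) := A.finite_real_spectrum.continuousOn h
  rw [← cfc_mul f g A (cont f) (cont g), trace_cfc hA]
  simp

open scoped ComplexOrder MatrixOrder in
lemma posSemidef_cfc {A : Matrix V V 𝕜} {f : ℝ → ℝ} (hf : ∀ x ∈ spectrum ℝ A, 0 ≤ f x) :
    (cfc f A).PosSemidef :=
  nonneg_iff_posSemidef.mp (cfc_nonneg hf)

end Spectral

section SumOfEntries

variable {V : Type*} [Fintype V] {Z : Matrix V V ℝ}

lemma sum_sum_nonneg_of_posSemidef (hZ : Z.PosSemidef) : 0 ≤ ∑ u, ∑ v, Z u v := by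
  simpa [dotProduct, mulVec] using hZ.dotProduct_mulVec_nonneg 1

-- Pair `Z` with the Laplacian `|V| • 1 - J` of the complete graph.
lemma sum_sum_le_card_mul_trace (hZ : Z.PosSemidef) :
    ∑ u, ∑ v, Z u v ≤ Fintype.card V * Z.trace := by
  classical
  have hL : (weightedLaplacian (of 1 : Matrix V V ℝ)).PosSemidef :=
    posSemidef_weightedLaplacian rfl fun _ _ => zero_le_one
  have hsum : ∑ u, ∑ v, (weightedLaplacian (of 1) ⊙ Z) u v =
      Fintype.card V * Z.trace - ∑ u, ∑ v, Z u v := by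
    simp [weightedLaplacian, diagonal_apply, sub_mul, trace, mul_sum]
  exact sub_nonneg.mp (hsum ▸ sum_sum_nonneg_of_posSemidef (hL.hadamard hZ))

end SumOfEntries

section Frobenius

variable {n : ℕ}

lemma frob_matJ_left (Z : Matrix (Fin n) (Fin n) ℝ) : frob (matJ n) Z = ∑ u, ∑ v, Z u v := by
  simp [frob, matJ]

lemma frob_cfc_cfc {A : Matrix (Fin n) (Fin n) ℝ} (hA : A.IsHermitian) (f g : ℝ → ℝ) :
    frob (cfc f A) (cfc g A) = ∑ i, f (hA.eigenvalues i) * g (hA.eigenvalues i) := by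
  have hsymm : (cfc g A)ᵀ = cfc g A := by
    rw [← conjTranspose_eq_transpose_of_trivial]
    exact cfc_predicate g A
  calc frob (cfc f A) (cfc g A)
      = (cfc f A * (cfc g A)ᵀ).trace := sum_hadamard_eq (cfc f A) (cfc g A)
    _ = ∑ i, f (hA.eigenvalues i) * g (hA.eigenvalues i) := by
        rw [hsymm, trace_cfc_mul_cfc hA]
        rfl

lemma frob_sq_le_frob_matJ_mul_frob_hadamard_self {W : Matrix (Fin n) (Fin n) ℝ}
    (hW₀ : ∀ u v, 0 ≤ W u v) (M : Matrix (Fin n) (Fin n) ℝ) :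
    frob W M ^ 2 ≤ frob (matJ n) W * frob W (M ⊙ M) := by
  have cauchySchwarz := sum_sq_le_sum_mul_sum_of_sq_le_mul (univ : Finset (Fin n × Fin n))
    (r := fun p => W p.1 p.2 * M p.1 p.2) (f := fun p => W p.1 p.2)
    (g := fun p => W p.1 p.2 * (M p.1 p.2 * M p.1 p.2)) (fun p _ => hW₀ p.1 p.2)
    (fun p _ => mul_nonneg (hW₀ p.1 p.2) (mul_self_nonneg _)) fun p _ => le_of_eq (by ring)
  rw [frob_matJ_left]
  simpa only [frob, hadamard_apply, Fintype.sum_prod_type] using cauchySchwarz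

end Frobenius

section VectorChromaticNumber

variable {n : ℕ} (G : SimpleGraph (Fin n)) [DecidableRel G.Adj]

lemma frob_matJ_le_chiVec {Z : Matrix (Fin n) (Fin n) ℝ} (hZ₀ : ∀ u v, 0 ≤ Z u v)
    (hZ : Z.PosSemidef) (htr : Z.trace = 1) (hG : ∀ u v, u ≠ v → ¬ G.Adj u v → Z u v = 0) :
    frob (matJ n) Z ≤ chiVec G := by
  refine le_csSup ⟨n, ?_⟩ ⟨Z, ?_, hZ₀, hZ, htr, hG, rfl⟩
  · rintro x ⟨Y, -, -, hY, htrY, -, rfl⟩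
    simpa [frob_matJ_left, htrY] using sum_sum_le_card_mul_trace hY
  · rw [IsSymm, ← conjTranspose_eq_transpose_of_trivial, hZ.isHermitian]

lemma frob_matJ_le_chiVec_mul_trace {Z : Matrix (Fin n) (Fin n) ℝ} (hZ₀ : ∀ u v, 0 ≤ Z u v)
    (hZ : Z.PosSemidef) (hG : ∀ u v, u ≠ v → ¬ G.Adj u v → Z u v = 0) :
    frob (matJ n) Z ≤ chiVec G * Z.trace := by
  obtain htr | htr := hZ.trace_nonneg.eq_or_lt
  · rw [← htr, hZ.trace_eq_zero_iff.mp htr.symm]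
    simp [frob]
  · have hnormalized : frob (matJ n) (Z.trace⁻¹ • Z) ≤ chiVec G :=
      frob_matJ_le_chiVec G (fun u v => mul_nonneg (inv_nonneg.mpr htr.le) (hZ₀ u v))
        (hZ.smul (inv_nonneg.mpr htr.le)) (by simp [trace_smul, htr.ne'])
        fun u v huv hadj => by simp [hG u v huv hadj]
    rw [mul_comm, ← inv_mul_le_iff₀ htr]
    simpa [frob_matJ_left, mul_sum] using hnormalized

lemma frob_matJ_le_chiVec_mul_sub_frob_adjMatrix {Q : Matrix (Fin n) (Fin n) ℝ}
    (hQ₀ : ∀ u v, 0 ≤ Q u v) (hQ : Q.PosSemidef) :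
    frob (matJ n) Q ≤ chiVec G * (frob (matJ n) Q - frob (G.adjMatrix ℝ) Q) := by
  have h := frob_matJ_le_chiVec_mul_trace G (nonEdgesToDiagonal_nonneg G hQ₀)
    (posSemidef_nonEdgesToDiagonal G hQ₀ hQ) fun u v huv hadj => by
      rw [nonEdgesToDiagonal_apply_of_ne G Q huv, if_neg hadj]
  rw [trace_nonEdgesToDiagonal, frob_matJ_left, sum_nonEdgesToDiagonal] at h
  rwa [frob_matJ_left]

lemma one_le_chiVec [NeZero n] : 1 ≤ chiVec G := by
  have h : frob (matJ n) 1 ≤ chiVec G * trace 1 :=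
    frob_matJ_le_chiVec_mul_trace G (fun u v => by rw [one_apply]; positivity) .one
      fun u v huv _ => one_apply_ne huv
  have hn : (0 : ℝ) < n := Nat.cast_pos.mpr (NeZero.pos n)
  simpa [frob_matJ_left, one_apply, hn] using h

end VectorChromaticNumber

section AdjacencySpectrum

variable {n : ℕ} (G : SimpleGraph (Fin n)) [DecidableRel G.Adj]

lemma adjMatrix_eq_cfc_id : G.adjMatrix ℝ = cfc (id : ℝ → ℝ) (G.adjMatrix ℝ) :=
  (cfc_id ℝ (G.adjMatrix ℝ) (adjHerm G).isSelfAdjoint).symm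

lemma Aplus_eq_cfc : Aplus G = cfc (fun x : ℝ => if 0 < x then x else 0) (G.adjMatrix ℝ) := by
  rw [(adjHerm G).cfc_eq, IsHermitian.cfc, Unitary.conjStarAlgAut_apply]
  rfl

lemma posSemidef_Aplus : (Aplus G).PosSemidef := by
  rw [Aplus_eq_cfc]
  exact posSemidef_cfc fun x _ => by split_ifs with hx <;> [exact hx.le; rfl]

lemma frob_Aplus_self : frob (Aplus G) (Aplus G) = sPlus G := by
  rw [Aplus_eq_cfc, frob_cfc_cfc (adjHerm G), sPlus]
  exact sum_congr rfl fun i _ => by split_ifs <;> ring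

lemma frob_adjMatrix_Aplus : frob (G.adjMatrix ℝ) (Aplus G) = sPlus G := by
  rw [adjMatrix_eq_cfc_id, Aplus_eq_cfc, frob_cfc_cfc (adjHerm G), sPlus]
  simp [sq]

lemma frob_adjMatrix_self : frob (G.adjMatrix ℝ) (G.adjMatrix ℝ) = sPlus G + sMinus G := by
  rw [adjMatrix_eq_cfc_id, frob_cfc_cfc (adjHerm G), sPlus, sMinus, ← sum_add_distrib]
  refine sum_congr rfl fun i _ => ?_
  obtain h | h | h := lt_trichotomy ((adjHerm G).eigenvalues i) 0 <;>
    simp [h, h.not_gt, sq]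

lemma frob_matJ_adjMatrix : frob (matJ n) (G.adjMatrix ℝ) = sPlus G + sMinus G := by
  rw [← frob_adjMatrix_self, frob_matJ_left]
  conv_lhs => rw [← G.adjMatrix_hadamard_self ℝ]
  rfl

lemma sPlus_nonneg : 0 ≤ sPlus G :=
  sum_nonneg fun i _ => by positivity

lemma sMinus_nonneg : 0 ≤ sMinus G :=
  sum_nonneg fun i _ => by positivity

lemma sPlus_sq_le_add_mul_frob_adjMatrix :
    sPlus G ^ 2 ≤ (sPlus G + sMinus G) * frob (G.adjMatrix ℝ) (Aplus G ⊙ Aplus G) := by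
  rw [← frob_matJ_adjMatrix]
  nth_rewrite 1 [← frob_adjMatrix_Aplus]
  exact frob_sq_le_frob_matJ_mul_frob_hadamard_self
    (fun u v => by rw [SimpleGraph.adjMatrix_apply]; positivity) _

lemma sPlus_le_chiVec_mul_sub_frob_adjMatrix :
    sPlus G ≤ chiVec G * (sPlus G - frob (G.adjMatrix ℝ) (Aplus G ⊙ Aplus G)) := by
  have hsum : frob (matJ n) (Aplus G ⊙ Aplus G) = sPlus G := by
    rw [frob_matJ_left, ← frob_Aplus_self]
    rfl
  rw [← hsum]
  exact frob_matJ_le_chiVec_mul_sub_frob_adjMatrix G (fun u v => mul_self_nonneg _)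
    ((posSemidef_Aplus G).hadamard (posSemidef_Aplus G))

lemma sPlus_mul_add_le_sPlus_mul_chiVec_mul [NeZero n] :
    sPlus G * (sPlus G + sMinus G) ≤ sPlus G * (chiVec G * sMinus G) := by
  have hχ : 0 ≤ chiVec G := zero_le_one.trans (one_le_chiVec G)
  set b := frob (G.adjMatrix ℝ) (Aplus G ⊙ Aplus G)
  calc sPlus G * (sPlus G + sMinus G)
      ≤ chiVec G * (sPlus G - b) * (sPlus G + sMinus G) :=
        mul_le_mul_of_nonneg_right (sPlus_le_chiVec_mul_sub_frob_adjMatrix G)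
          (add_nonneg (sPlus_nonneg G) (sMinus_nonneg G))
    _ = chiVec G * (sPlus G * (sPlus G + sMinus G) - (sPlus G + sMinus G) * b) := by ring
    _ ≤ chiVec G * (sPlus G * (sPlus G + sMinus G) - sPlus G ^ 2) := by
        gcongr
        exact sPlus_sq_le_add_mul_frob_adjMatrix G
    _ = sPlus G * (chiVec G * sMinus G) := by ring

end AdjacencySpectrum

/-- For every graph `G`, `s⁺ ≤ (χvec(G) − 1) · s⁻`. -/
theorem sPlus_le_chiVec_sub_one_mul_sMinus {n : ℕ} (G : SimpleGraph (Fin n))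
    [DecidableRel G.Adj] :
    sPlus G ≤ (chiVec G - 1) * sMinus G := by
  obtain rfl | hn := eq_zero_or_neZero n
  · simp [sPlus, sMinus]
  obtain hzero | hpos := (sPlus_nonneg G).eq_or_lt
  · rw [← hzero]
    exact mul_nonneg (sub_nonneg.mpr (one_le_chiVec G)) (sMinus_nonneg G)
  · have hadd : sPlus G + sMinus G ≤ chiVec G * sMinus G :=
      le_of_mul_le_mul_left (sPlus_mul_add_le_sPlus_mul_chiVec_mul G) hpos
    rw [sub_one_mul]
    exact le_sub_right_of_add_le hadd
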